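/- Let F and E be Galois number fields with [F : ℚ] = [E : ℚ] = p, where p is an odd prime. Then there exist infinitely many rational primes q that are inert simultaneously in F and in E, i.e., such that q·O_F is a prime ideal of O_F and q·O_E is a prime ideal of O_E. -/

import Mathlib

namespace InertAux
open NumberField Ideal

lemma trich (K : Type*) [Field K] [NumberField K] [IsGalois ℚ K] (p : ℕ) (hp : p.Prime)
    (hK : Module.finrank ℚ K = p) (q : ℕ) (hq : q.Prime) :
    (q : ℤ) ∣ discr K ∨ (Ideal.span {(q : 𝓞 K)}).IsPrime ∨
    ∃ T : Finset (Ideal (𝓞 K)), T.card = p ∧ ∀ P ∈ T, P.IsPrime ∧ P ≠ ⊥ ∧ absNorm P = q := by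
  by_cases hd : (q : ℤ) ∣ discr K
  · exact Or.inl hd
  refine Or.inr ?_
  have hqZ := Nat.prime_iff_prime_int.mp hq
  have hunr := (not_dvd_discr_iff_isUnramifiedIn K (𝓞 K) hqZ).mp hd
  have hPr : (span {(q : ℤ)}).IsPrime := by rwa [span_singleton_prime hqZ.ne_zero]
  have hmax : (span {(q : ℤ)}).IsMaximal := hPr.isMaximal (by simpa using hqZ.ne_zero)
  have key := ncard_primesOver_mul_ramificationIdxIn_mul_inertiaDegIn (span {(q : ℤ)}) (𝓞 K) Gal(K/ℚ)
  rw [IsGalois.card_aut_eq_finrank, hK] at key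
  obtain ⟨⟨P, hP, hPo⟩⟩ : Nonempty (primesOver (span {(q : ℤ)}) (𝓞 K)) := inferInstance
  have he : ramificationIdxIn (span {(q : ℤ)}) (𝓞 K) = 1 := by
    rw [ramificationIdxIn_eq_ramificationIdx _ P Gal(K/ℚ)]
    exact hunr.ramificationIdx_eq_one hPo
  have hnorm : ∀ P : Ideal (𝓞 K), P.IsPrime → P.LiesOver (span {(q : ℤ)}) →
      absNorm P = q ^ inertiaDegIn (span {(q : ℤ)}) (𝓞 K) := by
    intro P hP hPo
    rw [inertiaDegIn_eq_inertiaDeg _ P Gal(K/ℚ)]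
    simpa using (natAbs_pow_inertiaDeg (q : ℤ) P).symm
  rw [he, one_mul] at key
  have h1 : inertiaDegIn (span {(q : ℤ)}) (𝓞 K) ∣ p := ⟨_, by rw [mul_comm]; exact key.symm⟩
  rcases (Nat.dvd_prime hp).mp h1 with h | h
  · right
    have hfin : (primesOver (span {(q : ℤ)}) (𝓞 K)).Finite := Algebra.QuasiFinite.finite_primesOver _
    refine ⟨hfin.toFinset, ?_, ?_⟩
    · rw [← Set.ncard_eq_toFinset_card _ hfin]
      simpa [h] using key
    · intro P hP
      rw [Set.Finite.mem_toFinset] at hP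
      have := hnorm P hP.1 hP.2
      rw [h, pow_one] at this
      refine ⟨hP.1, ?_, this⟩
      rintro rfl
      simp at this
      exact hq.ne_zero this.symm
  · left
    have h2 := hnorm P hP hPo
    have hle : span {(q : 𝓞 K)} ≤ P := by
      rw [span_singleton_le_iff_mem]
      have : (q : ℤ) ∈ P.under ℤ := by
        rw [← hPo.over]; exact mem_span_singleton_self _
      simpa [Ideal.under, Ideal.mem_comap] using this
    obtain ⟨J, hJ⟩ := Ideal.dvd_iff_le.mpr hle
    have h3 := congrArg absNorm hJ
    have h4 : absNorm (span {(q : 𝓞 K)}) = q ^ p := by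
      rw [absNorm_span_singleton]
      have : (q : 𝓞 K) = algebraMap ℤ (𝓞 K) q := by simp
      rw [this, Algebra.norm_algebraMap, RingOfIntegers.rank, hK]
      simp [Int.natAbs_pow]
    rw [map_mul, h2, h4, h] at h3
    have h5 : absNorm J = 1 := by
      have : 0 < q ^ p := pow_pos hq.pos _
      exact (Nat.eq_of_mul_eq_mul_left this (by rw [← h3, mul_one])).symm
    rw [absNorm_eq_one_iff] at h5
    rw [hJ, h5, mul_top]
    exact hP

lemma fin_bound (K : Type*) [Field K] [NumberField K] (p : ℕ) (S : Finset ℕ)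
    (hS : ∀ q ∈ S, ∃ T : Finset (Ideal (𝓞 K)), T.card = p ∧
      ∀ P ∈ T, P.IsPrime ∧ P ≠ ⊥ ∧ absNorm P = q) (s : ℝ) (hs : 0 < s)
    (hsum : LSeriesSummable (fun n ↦ (Nat.card {I : Ideal (𝓞 K) // absNorm I = n} : ℂ)) s) :
    ∏ q ∈ S, (1 + (q : ℝ) ^ (-s)) ^ p ≤ (dedekindZeta K s).re := by
  classical
  choose! T hT1 hT2 using hS
  have hterm : ∀ n : ℕ, (LSeries.term
      (fun n ↦ (Nat.card {I : Ideal (𝓞 K) // absNorm I = n} : ℂ)) s n).re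
      = (Nat.card {I : Ideal (𝓞 K) // absNorm I = n} : ℝ) * (n : ℝ) ^ (-s) := by
    intro n
    rcases eq_or_ne n 0 with rfl | hn
    · simp [Real.zero_rpow (neg_ne_zero.mpr hs.ne')]
    · rw [LSeries.term_of_ne_zero hn, Real.rpow_neg (Nat.cast_nonneg _), ← div_eq_mul_inv,
        ← Complex.ofReal_natCast n, ← Complex.ofReal_cpow (Nat.cast_nonneg _),
        ← Complex.ofReal_natCast, ← Complex.ofReal_div, Complex.ofReal_re]
  set U := S.biUnion T with hU
  have hdisj : Set.PairwiseDisjoint (S : Set ℕ) T := by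
    intro q hq r hr hqr
    refine Finset.disjoint_left.mpr fun P hP hP' ↦ hqr ?_
    rw [← (hT2 q hq P hP).2.2, (hT2 r hr P hP').2.2]
  have hUp : ∀ P ∈ U, Prime P := by
    intro P hP
    obtain ⟨q, hq, hPq⟩ := Finset.mem_biUnion.mp hP
    exact Ideal.prime_of_isPrime (hT2 q hq P hPq).2.1 (hT2 q hq P hPq).1
  have e1 : ∏ q ∈ S, (1 + (q : ℝ) ^ (-s)) ^ p = ∏ P ∈ U, (1 + (absNorm P : ℝ) ^ (-s)) := by
    rw [hU, Finset.prod_biUnion hdisj]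
    refine Finset.prod_congr rfl fun q hq ↦ ?_
    rw [← hT1 q hq, ← Finset.prod_const]
    refine Finset.prod_congr rfl fun P hP ↦ ?_
    rw [(hT2 q hq P hP).2.2]
  have hinj : Set.InjOn (fun V : Finset (Ideal (𝓞 K)) ↦ ∏ P ∈ V, P) (U.powerset : Set _) := by
    intro V hV W hW h
    have hv : ∀ V ∈ U.powerset, UniqueFactorizationMonoid.normalizedFactors (∏ P ∈ V, P) = V.val := by
      intro V hV
      have := UniqueFactorizationMonoid.normalizedFactors_prod_of_prime (m := V.val)
        (fun P hP ↦ hUp P (Finset.mem_powerset.mp hV hP))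
      rwa [Finset.prod_eq_multiset_prod, Multiset.map_id']
    apply Finset.val_injective
    rw [← hv V hV, ← hv W hW]
    exact congrArg _ h
  have e2 : ∏ P ∈ U, (1 + (absNorm P : ℝ) ^ (-s)) =
      ∑ I ∈ U.powerset.image (fun V ↦ ∏ P ∈ V, P), (absNorm I : ℝ) ^ (-s) := by
    rw [Finset.prod_one_add, Finset.sum_image hinj]
    refine Finset.sum_congr rfl fun V _ ↦ ?_
    rw [map_prod, Nat.cast_prod, Real.finsetProd_rpow _ _ (fun _ _ ↦ Nat.cast_nonneg _)]
  rw [e1, e2]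
  set W := U.powerset.image (fun V ↦ ∏ P ∈ V, P)
  rw [← Finset.sum_fiberwise_of_maps_to (t := W.image absNorm) (g := absNorm)
    (fun I hI ↦ Finset.mem_image_of_mem _ hI)]
  have hre : (dedekindZeta K s).re = ∑' n : ℕ,
      (Nat.card {I : Ideal (𝓞 K) // absNorm I = n} : ℝ) * (n : ℝ) ^ (-s) := by
    rw [dedekindZeta, LSeries, Complex.re_tsum hsum]
    exact tsum_congr hterm
  have hsum' : Summable fun n : ℕ ↦
      (Nat.card {I : Ideal (𝓞 K) // absNorm I = n} : ℝ) * (n : ℝ) ^ (-s) :=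
    (Complex.reCLM.summable hsum).congr hterm
  rw [hre]
  refine le_trans (Finset.sum_le_sum fun n _ ↦ ?_)
    (hsum'.sum_le_tsum (W.image absNorm) (fun n _ ↦ by positivity))
  rw [Finset.sum_congr rfl (g := fun _ ↦ (n : ℝ) ^ (-s))
    (fun I hI ↦ by rw [(Finset.mem_filter.mp hI).2]), Finset.sum_const, nsmul_eq_mul]
  gcongr
  have hfin := finite_setOfPred_absNorm_eq (S := 𝓞 K) n
  have hle := Set.ncard_le_ncard (s := ((W.filter fun I ↦ absNorm I = n : Finset _) : Set _))
    (t := {I : Ideal (𝓞 K) | absNorm I = n}) (fun I hI ↦ by simp at hI; exact hI.2) hfin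
  rw [Set.ncard_coe_finset, ← Nat.card_coe_set_eq] at hle
  exact hle

lemma zeta_bound (s : ℝ) (hs : 1 < s) :
    (∑' n : ℕ, 1 / (n : ℝ) ^ s) ≤
      Real.exp (∑' q : Nat.Primes, ((q : ℝ) ^ (-s) + 2 * ((q : ℝ) ^ (-s)) ^ 2)) := by
  let f : ℕ →*₀ ℝ :=
    { toFun := fun n ↦ (n : ℝ) ^ (-s)
      map_zero' := by simp [Real.zero_rpow (show -s ≠ 0 by linarith)]
      map_one' := by simp
      map_mul' := fun m n ↦ by
        push_cast
        exact Real.mul_rpow (Nat.cast_nonneg _) (Nat.cast_nonneg _) }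
  have hfs : Summable (fun n ↦ ‖f n‖) := by
    refine (Real.summable_nat_rpow.mpr (show -s < -1 by linarith)).congr fun n ↦ ?_
    exact (Real.norm_of_nonneg (by positivity : (0 : ℝ) ≤ (n : ℝ) ^ (-s))).symm
  have hP := EulerProduct.eulerProduct_completely_multiplicative_hasProd hfs
  have h1 : Summable fun q : Nat.Primes ↦ (q : ℝ) ^ (-s) :=
    Nat.Primes.summable_rpow.mpr (by linarith)
  have h2 : Summable fun q : Nat.Primes ↦ ((q : ℝ) ^ (-s)) ^ 2 := by
    refine (Nat.Primes.summable_rpow.mpr (show -s * 2 < -1 by linarith)).congr fun q ↦ ?_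
    rw [Real.rpow_mul (Nat.cast_nonneg _), Real.rpow_two]
  have h3 := h1.add (h2.mul_left 2)
  have : (∑' n : ℕ, 1 / (n : ℝ) ^ s) = ∑' n, f n := by
    refine tsum_congr fun n ↦ ?_
    change _ = (n : ℝ) ^ (-s)
    rw [Real.rpow_neg (Nat.cast_nonneg _), one_div]
  rw [this]
  refine le_of_tendsto' hP fun t ↦ ?_
  refine le_trans (b := Real.exp (∑ q ∈ t, ((q : ℝ) ^ (-s) + 2 * ((q : ℝ) ^ (-s)) ^ 2))) ?_
    (Real.exp_le_exp.mpr (h3.sum_le_tsum t (fun _ _ ↦ by positivity)))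
  rw [Real.exp_sum]
  have hx : ∀ q : Nat.Primes, 0 ≤ (q : ℝ) ^ (-s) ∧ (q : ℝ) ^ (-s) ≤ 1 / 2 := by
    intro q
    refine ⟨by positivity, ?_⟩
    have hq : (2 : ℝ) ≤ q := by exact_mod_cast q.2.two_le
    calc (q : ℝ) ^ (-s) ≤ (q : ℝ) ^ (-1 : ℝ) :=
          Real.rpow_le_rpow_of_exponent_le (by linarith) (by linarith)
      _ = (q : ℝ)⁻¹ := Real.rpow_neg_one _
      _ ≤ 1 / 2 := by rw [one_div]; exact inv_anti₀ (by norm_num) hq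
  refine Finset.prod_le_prod (fun q _ ↦ ?_) (fun q _ ↦ ?_)
  · have := (hx q).2
    change 0 ≤ (1 - (q : ℝ) ^ (-s))⁻¹
    exact inv_nonneg.mpr (by linarith)
  · obtain ⟨h0, h1⟩ := hx q
    change (1 - (q : ℝ) ^ (-s))⁻¹ ≤ _
    set x := (q : ℝ) ^ (-s)
    refine le_trans ?_ (Real.add_one_le_exp _)
    rw [inv_le_iff_one_le_mul₀ (by linarith)]
    nlinarith [mul_nonneg h0 h0, mul_nonneg (mul_nonneg h0 h0) (by linarith : 0 ≤ 1 - 2 * x)]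

lemma exp_bound (x : ℝ) (hx : 0 ≤ x) : Real.exp (x - x ^ 2) ≤ 1 + x := by
  have h := Real.add_one_le_exp (-(x - x ^ 2))
  have hpos : 0 < -(x - x ^ 2) + 1 := by nlinarith [sq_nonneg (x - 1 / 2)]
  rw [Real.exp_neg] at h
  have h2 := inv_anti₀ hpos h
  rw [inv_inv] at h2
  refine h2.trans ?_
  rw [inv_le_iff_one_le_mul₀ hpos]
  nlinarith [pow_nonneg hx 3]

/-- bound for the split primes -/
lemma split_bound (K : Type*) [Field K] [NumberField K] (p : ℕ) (S : Finset ℕ)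
    (hS : ∀ q ∈ S, ∃ T : Finset (Ideal (𝓞 K)), T.card = p ∧
      ∀ P ∈ T, P.IsPrime ∧ P ≠ ⊥ ∧ absNorm P = q) (s : ℝ) (hs : 0 < s)
    (hsum : LSeriesSummable (fun n ↦ (Nat.card {I : Ideal (𝓞 K) // absNorm I = n} : ℂ)) s) :
    Real.exp (p * ∑ q ∈ S, ((q : ℝ) ^ (-s) - ((q : ℝ) ^ (-s)) ^ 2)) ≤ (dedekindZeta K s).re := by
  refine le_trans ?_ (fin_bound K p S hS s hs hsum)
  rw [Finset.mul_sum, Real.exp_sum]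
  refine Finset.prod_le_prod (fun _ _ ↦ (Real.exp_pos _).le) fun q _ ↦ ?_
  rw [Real.exp_nat_mul]
  exact pow_le_pow_left₀ (Real.exp_pos _).le (exp_bound _ (by positivity)) _

lemma ev_summable (K : Type*) [Field K] [NumberField K] :
    ∀ᶠ s : ℝ in nhdsWithin 1 (Set.Ioi 1),
      LSeriesSummable (fun n ↦ (Nat.card {I : Ideal (𝓞 K) // absNorm I = n} : ℂ)) s := by
  have h := tendsto_sub_one_mul_dedekindZeta_nhdsGT K
  have h2 := h.eventually_ne (Complex.ofReal_ne_zero.mpr (dedekindZeta_residue_ne_zero K))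
  filter_upwards [h2] with s hs
  by_contra hn
  apply hs
  rw [dedekindZeta, LSeries, tsum_eq_zero_of_not_summable hn, mul_zero]

/-- `q` splits completely: there are `p` primes of norm `q`. -/
def SplitIn (K : Type*) [Field K] [NumberField K] (p q : ℕ) : Prop :=
  ∃ T : Finset (Ideal (𝓞 K)), T.card = p ∧ ∀ P ∈ T, P.IsPrime ∧ P ≠ ⊥ ∧ absNorm P = q

lemma finite_dvd_discr (K : Type*) [Field K] [NumberField K] :
    {q : ℕ | (q : ℤ) ∣ discr K}.Finite := by
  refine (Set.finite_Iic (discr K).natAbs).subset fun q hq ↦ ?_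
  exact Nat.le_of_dvd (Int.natAbs_pos.mpr (discr_ne_zero K)) (Int.natCast_dvd.mp hq)

lemma main_bound (F E : Type*) [Field F] [NumberField F] [Field E] [NumberField E] (p : ℕ)
    (B : Finset ℕ)
    (hB : ∀ q : ℕ, q.Prime → q ∈ B ∨ SplitIn F p q ∨ SplitIn E p q) (s : ℝ) (hs : 1 < s)
    (hF : LSeriesSummable (fun n ↦ (Nat.card {I : Ideal (𝓞 F) // absNorm I = n} : ℂ)) s)
    (hE : LSeriesSummable (fun n ↦ (Nat.card {I : Ideal (𝓞 E) // absNorm I = n} : ℂ)) s) :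
    (∑' n : ℕ, 1 / (n : ℝ) ^ s) ^ p ≤
      Real.exp (p * (B.card + 4 * ∑' n : ℕ, 1 / (n : ℝ) ^ 2)) *
        ((dedekindZeta F s).re * (dedekindZeta E s).re) := by
  classical
  set C := ∑' n : ℕ, 1 / (n : ℝ) ^ 2
  have hC : ∀ S : Finset ℕ, (∀ q ∈ S, q.Prime) → ∑ q ∈ S, ((q : ℝ) ^ (-s)) ^ 2 ≤ C := by
    intro S hS
    refine le_trans (Finset.sum_le_sum fun q hq ↦ ?_)
      ((Real.summable_one_div_nat_pow.mpr one_lt_two).sum_le_tsum S (fun _ _ ↦ by positivity))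
    have hq1 : (1 : ℝ) ≤ q := by exact_mod_cast (hS q hq).one_lt.le
    rw [← one_div_pow]
    refine pow_le_pow_left₀ (by positivity) ?_ 2
    rw [one_div, ← Real.rpow_neg_one]
    exact Real.rpow_le_rpow_of_exponent_le hq1 (by linarith)
  have hZF : 0 < (dedekindZeta F s).re := by
    have := split_bound F p ∅ (by simp) s (by linarith) hF
    exact lt_of_lt_of_le (Real.exp_pos _) this
  have hZE : 0 < (dedekindZeta E s).re := by
    have := split_bound E p ∅ (by simp) s (by linarith) hE
    exact lt_of_lt_of_le (Real.exp_pos _) this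
  set D := Real.log (dedekindZeta F s).re + Real.log (dedekindZeta E s).re with hD
  have hfin : ∀ S : Finset ℕ, (∀ q ∈ S, q.Prime) →
      p * ∑ q ∈ S, ((q : ℝ) ^ (-s) + 2 * ((q : ℝ) ^ (-s)) ^ 2) ≤ p * (B.card + 4 * C) + D := by
    intro S hS
    have h1 := split_bound F p (S.filter (SplitIn F p)) (fun q hq ↦ (Finset.mem_filter.mp hq).2)
      s (by linarith) hF
    have h2 := split_bound E p (S.filter (SplitIn E p)) (fun q hq ↦ (Finset.mem_filter.mp hq).2)
      s (by linarith) hE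
    rw [← Real.le_log_iff_exp_le hZF, Finset.sum_sub_distrib] at h1
    rw [← Real.le_log_iff_exp_le hZE, Finset.sum_sub_distrib] at h2
    have c1 := hC (S.filter (SplitIn F p)) (fun q hq ↦ hS q (Finset.mem_filter.mp hq).1)
    have c2 := hC (S.filter (SplitIn E p)) (fun q hq ↦ hS q (Finset.mem_filter.mp hq).1)
    have c3 := hC S hS
    have h3 : ∑ q ∈ S, (q : ℝ) ^ (-s) ≤ B.card + ∑ q ∈ S.filter (SplitIn F p), (q : ℝ) ^ (-s)
        + ∑ q ∈ S.filter (SplitIn E p), (q : ℝ) ^ (-s) := by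
      have hb : ∑ q ∈ S.filter (· ∈ B), (q : ℝ) ^ (-s) ≤ B.card := by
        refine (Finset.sum_le_card_nsmul _ _ 1 fun q hq ↦ ?_).trans ?_
        · have hq1 : (1 : ℝ) ≤ q := by
            exact_mod_cast (hS q (Finset.mem_filter.mp hq).1).one_lt.le
          exact Real.rpow_le_one_of_one_le_of_nonpos hq1 (by linarith)
        · rw [nsmul_eq_mul, mul_one, Nat.cast_le]
          exact Finset.card_le_card fun q hq ↦ (Finset.mem_filter.mp hq).2
      refine le_trans ?_ (add_le_add (add_le_add hb le_rfl) le_rfl)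
      rw [Finset.sum_filter, Finset.sum_filter, Finset.sum_filter, ← Finset.sum_add_distrib,
        ← Finset.sum_add_distrib]
      refine Finset.sum_le_sum fun q hq ↦ ?_
      have h0 : (0 : ℝ) ≤ (q : ℝ) ^ (-s) := by positivity
      rcases hB q (hS q hq) with h | h | h <;> simp only [h, if_true] <;> split_ifs <;> linarith
    rw [Finset.sum_add_distrib, ← Finset.mul_sum]
    have hp0 : (0 : ℝ) ≤ p := Nat.cast_nonneg _
    have m3 := mul_le_mul_of_nonneg_left h3 hp0
    have k1 := mul_le_mul_of_nonneg_left c1 hp0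
    have k2 := mul_le_mul_of_nonneg_left c2 hp0
    have k3 := mul_le_mul_of_nonneg_left c3 hp0
    linarith
  have hexp : Real.exp (p * (B.card + 4 * C) + D) = Real.exp (p * (B.card + 4 * C)) *
        ((dedekindZeta F s).re * (dedekindZeta E s).re) := by
    rw [Real.exp_add, hD, Real.exp_add, Real.exp_log hZF, Real.exp_log hZE]
  rw [← hexp]
  refine (pow_le_pow_left₀ (tsum_nonneg fun n ↦ by positivity) (zeta_bound s hs) p).trans ?_
  rw [← Real.exp_nat_mul, ← tsum_mul_left]
  refine Real.exp_le_exp.mpr ?_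
  have hnn : 0 ≤ (p : ℝ) * (B.card + 4 * C) + D := by simpa using hfin ∅ (by simp)
  refine tsum_le_of_sum_le' hnn fun t ↦ ?_
  have := hfin (t.map ⟨fun q : Nat.Primes ↦ (q : ℕ), Subtype.val_injective⟩) (by
    intro q hq
    obtain ⟨r, _, rfl⟩ := Finset.mem_map.mp hq
    exact r.2)
  rw [Finset.sum_map, Finset.mul_sum] at this
  exact this

lemma tendsto_re (K : Type*) [Field K] [NumberField K] :
    Filter.Tendsto (fun s : ℝ ↦ (s - 1) * (dedekindZeta K s).re) (nhdsWithin 1 (Set.Ioi 1))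
      (nhds (dedekindZeta_residue K)) := by
  have := (Complex.continuous_re.tendsto _).comp (tendsto_sub_one_mul_dedekindZeta_nhdsGT K)
  rw [Complex.ofReal_re] at this
  refine this.congr fun s ↦ ?_
  rw [Function.comp_apply, ← Complex.ofReal_one, ← Complex.ofReal_sub, Complex.re_ofReal_mul]

end InertAux

open InertAux NumberField in
/-- If `F` and `E` are Galois number fields of the same odd prime degree `p`
over `ℚ`, then there are infinitely many rational primes `q` that are inert in both `F`
and `E`, i.e. such that `q·O_F` and `q·O_E` are prime ideals. -/
theorem infinite_primes_inert_in_both {F E : Type*}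
    [Field F] [NumberField F] [IsGalois ℚ F]
    [Field E] [NumberField E] [IsGalois ℚ E]
    (p : ℕ) (hp : p.Prime) (hodd : Odd p)
    (hF : Module.finrank ℚ F = p) (hE : Module.finrank ℚ E = p) :
    {q : ℕ | q.Prime ∧ (Ideal.span {(q : NumberField.RingOfIntegers F)}).IsPrime ∧
      (Ideal.span {(q : NumberField.RingOfIntegers E)}).IsPrime}.Infinite := by
  classical
  by_contra hfin
  rw [Set.not_infinite] at hfin
  have hBfin := (hfin.union (finite_dvd_discr F)).union (finite_dvd_discr E)
  have hB : ∀ q : ℕ, q.Prime → q ∈ hBfin.toFinset ∨ SplitIn F p q ∨ SplitIn E p q := by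
    intro q hq
    rw [Set.Finite.mem_toFinset]
    rcases trich F p hp hF q hq with h | h | h
    · exact Or.inl (Or.inl (Or.inr h))
    · rcases trich E p hp hE q hq with h' | h' | h'
      · exact Or.inl (Or.inr h')
      · exact Or.inl (Or.inl (Or.inl ⟨hq, h, h'⟩))
      · exact Or.inr (Or.inr h')
    · exact Or.inr (Or.inl h)
  have hp3 : 2 < p := by
    have := hp.two_le
    rcases hodd with ⟨k, hk⟩
    omega
  obtain ⟨k, rfl⟩ : ∃ k, p = k + 1 + 2 := ⟨p - 3, by omega⟩
  set M := Real.exp (((k + 1 + 2 : ℕ) : ℝ) * (hBfin.toFinset.card + 4 * ∑' n : ℕ, 1 / (n : ℝ) ^ 2))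
  have hreF := tendsto_re F
  have hreE := tendsto_re E
  have h0 : Filter.Tendsto (fun s : ℝ ↦ (s - 1) ^ (k + 1)) (nhdsWithin 1 (Set.Ioi 1)) (nhds 0) := by
    have : Filter.Tendsto (fun s : ℝ ↦ (s - 1) ^ (k + 1)) (nhds 1) (nhds ((1 - 1) ^ (k + 1))) :=
      Continuous.tendsto (by fun_prop) _
    rw [sub_self, zero_pow (Nat.succ_ne_zero k)] at this
    exact this.mono_left nhdsWithin_le_nhds
  have hR := (h0.mul (hreF.mul hreE)).const_mul M
  rw [zero_mul, mul_zero] at hR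
  have hL := tendsto_sub_mul_tsum_nat_rpow.pow (k + 1 + 2)
  rw [one_pow] at hL
  have := le_of_tendsto_of_tendsto hL hR (by
    filter_upwards [ev_summable F, ev_summable E, self_mem_nhdsWithin] with s h1 h2 h3
    have hs : (1 : ℝ) < s := h3
    have hb := main_bound F E (k + 1 + 2) hBfin.toFinset hB s hs h1 h2
    have hpos : 0 ≤ (s - 1) ^ (k + 1 + 2) := pow_nonneg (by linarith) _
    have := mul_le_mul_of_nonneg_left hb hpos
    rw [mul_pow]
    refine this.trans (le_of_eq ?_)
    ring)
  linarith
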